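/- Let N be a nonempty q^r-divisible set of n k-dimensional subspaces of F_q^v such that q^r divides n, and suppose r ≥ k. Then n ≥ q^{k+r}. -/

import Mathlib

open Classical in
theorem aux_count {F : Type} [Field F] [Fintype F] (v : ℕ) [Fintype (Module.Dual F (Fin v → F))]
    (S : Submodule F (Fin v → F)) (d : ℕ) (hd : Module.finrank F S + d = v) :
    (Finset.univ.filter (fun f : Module.Dual F (Fin v → F) => S ≤ LinearMap.ker f)).card
      = Fintype.card F ^ d := by
  have h1 := Subspace.finrank_add_finrank_dualAnnihilator_eq S
  have h2 : Module.finrank F S.dualAnnihilator = d := by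
    simp at h1; omega
  have h3 := Module.card_eq_pow_finrank (K := F) (V := S.dualAnnihilator)
  rw [h2] at h3
  rw [← h3, Fintype.card_subtype]
  congr 1
  ext f
  simp only [Finset.mem_filter, Finset.mem_univ, true_and, Submodule.mem_dualAnnihilator]
  rfl

theorem aux_dvd {F : Type} [Field F] (v : ℕ) (hv : 1 ≤ v)
    (f : Module.Dual F (Fin v → F)) (hf : f ≠ 0) :
    Module.finrank F (LinearMap.ker f) = v - 1 := by
  have h := Module.Dual.finrank_ker_add_one_of_ne_zero hf
  simp at h; omega

open Classical in
/-- A nonempty `q^r`-divisible set of `n` `k`-subspaces of `F_q^v` with `q^r ∣ n` and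
`r ≥ k` satisfies `n ≥ q^{k+r}`. -/
theorem divisible_set_card_lower_bound_dvd_large_r
    {F : Type} [Field F] [Fintype F] (q v k r n : ℕ)
    (hq : q = Fintype.card F) (hk : 1 ≤ k) (hr : 1 ≤ r) (hrk : k ≤ r)
    (N : Finset (Submodule F (Fin v → F))) (hn : N.card = n) (hne : N.Nonempty)
    (hdvd : q ^ r ∣ n)
    (hdim : ∀ U ∈ N, Module.finrank F ↥U = k)
    (hdisj : ∀ U ∈ N, ∀ W ∈ N, U ≠ W → U ⊓ W = ⊥)
    (hdiv : ∀ H : Submodule F (Fin v → F), Module.finrank F ↥H = v - 1 →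
      n ≡ Set.ncard {U : Submodule F (Fin v → F) | U ∈ N ∧ U ≤ H} [MOD q ^ r]) :
    q ^ (k + r) ≤ n := by
  have hq2 : 2 ≤ q := by rw [hq]; exact Fintype.one_lt_card
  have hn0 : 0 < n := by rw [← hn]; exact hne.card_pos
  have hqr : 2 ≤ q ^ r := le_trans hq2 (Nat.le_self_pow (by omega) q)
  have hn2 : 2 ≤ n := le_trans hqr (Nat.le_of_dvd hn0 hdvd)
  have hsup : ∀ U ∈ N, ∀ W ∈ N, U ≠ W → Module.finrank F ↥(U ⊔ W) = k + k := by
    intro U hU W hW hne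
    have h := Submodule.finrank_sup_add_finrank_inf_eq U W
    rw [hdisj U hU W hW hne, hdim U hU, hdim W hW] at h
    simpa using h
  obtain ⟨d, hd⟩ : ∃ d, k + k + d = v := by
    obtain ⟨U, hU, W, hW, hUW⟩ := Finset.one_lt_card.mp (by omega : 1 < N.card)
    have h1 := hsup U hU W hW hUW
    have h2 := Submodule.finrank_le (U ⊔ W)
    rw [h1] at h2
    simp at h2
    exact ⟨v - (k + k), by omega⟩
  have : Finite (Module.Dual F (Fin v → F)) := Module.finite_of_finite F
  have : Fintype (Module.Dual F (Fin v → F)) := Fintype.ofFinite _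
  let a : Module.Dual F (Fin v → F) → ℕ := fun f => (N.filter (fun U => U ≤ LinearMap.ker f)).card
  have ha : ∀ f, q ^ r ∣ a f := by
    intro f
    by_cases hf : f = 0
    · have : a f = n := by simp [a, hf, hn]
      rwa [this]
    · have h := hdiv _ (aux_dvd v (by omega) f hf)
      have h' : Set.ncard {U : Submodule F (Fin v → F) | U ∈ N ∧ U ≤ LinearMap.ker f} = a f := by
        simp only [a]
        rw [← Set.ncard_coe_finset]
        congr 1
        ext U
        simp
      rw [h'] at h
      exact (h.dvd_iff (dvd_refl _)).mp hdvd
  have hle : ∀ f, q ^ r * a f ≤ a f * a f := by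
    intro f
    rcases Nat.eq_zero_or_pos (a f) with h | h
    · simp [h]
    · exact Nat.mul_le_mul_right _ (Nat.le_of_dvd h (ha f))
  have haf : ∀ f, a f = ∑ U ∈ N, if U ≤ LinearMap.ker f then 1 else 0 := by
    intro f; simp [a]
  have hs1 : ∑ f, a f = n * q ^ (k + d) := by
    simp_rw [haf]
    rw [Finset.sum_comm]
    rw [Finset.sum_congr rfl (g := fun _ => q ^ (k + d)), Finset.sum_const, hn, smul_eq_mul]
    intro U hU
    rw [Finset.sum_boole, aux_count v U (k + d) (by rw [hdim U hU]; omega), hq]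
    simp
  have hs2 : ∑ f, a f * a f = n * (q ^ (k + d) + (n - 1) * q ^ d) := by
    simp_rw [haf, Finset.sum_mul_sum]
    rw [Finset.sum_comm]
    rw [Finset.sum_congr rfl (g := fun _ => q ^ (k + d) + (n - 1) * q ^ d), Finset.sum_const, hn,
      smul_eq_mul]
    intro U hU
    rw [Finset.sum_comm, ← Finset.add_sum_erase N _ hU]
    congr 1
    · rw [hq, ← aux_count v U (k + d) (by rw [hdim U hU]; omega), Finset.card_filter]
      apply Finset.sum_congr rfl
      intro f _
      split_ifs <;> rfl
    · rw [Finset.sum_congr rfl (g := fun _ => q ^ d), Finset.sum_const,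
        Finset.card_erase_of_mem hU, hn, smul_eq_mul]
      intro W hW
      rw [Finset.mem_erase] at hW
      rw [hq, ← aux_count v (U ⊔ W) d (by rw [hsup U hU W hW.2 hW.1.symm]; omega),
        Finset.card_filter]
      apply Finset.sum_congr rfl
      intro f _
      simp only [sup_le_iff]
      split_ifs <;> simp_all
  have key : q ^ r * (n * q ^ (k + d)) ≤ n * (q ^ (k + d) + (n - 1) * q ^ d) := by
    rw [← hs1, ← hs2, Finset.mul_sum]
    exact Finset.sum_le_sum (fun f _ => hle f)
  have key2 : q ^ r * q ^ k ≤ q ^ k + (n - 1) := by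
    have hpos : 0 < n * q ^ d := by positivity
    refine Nat.le_of_mul_le_mul_left ?_ hpos
    calc _ = q ^ r * (n * q ^ (k + d)) := by ring
      _ ≤ _ := key
      _ = _ := by ring
  obtain ⟨m, rfl⟩ := hdvd
  have hkr : q ^ k ≤ q ^ r := Nat.pow_le_pow_right (by omega) hrk
  rw [pow_add, mul_comm (q ^ k)]
  apply Nat.mul_le_mul_left
  by_contra hlt
  have h1 : m + 1 ≤ q ^ k := by omega
  have h2 := Nat.mul_le_mul_left (q ^ r) h1
  rw [mul_add, mul_one] at h2
  omega
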